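/- For every real m > 0, all integers k ≥ 1 and 1 ≤ k' ≤ k, and every x ∈ (0, 2π), define E(x) = (π − x)/2 − Σ_{j=1}^{k'} d^m_{j,k} sin(j x)/j. Then |E(x)| ≤ (1 − d^m_{1,k})·|π − x|/2 + (1/|sin(x/2)|)·( Σ_{j=1}^{k'−1} (d^m_{j,k} − d^m_{j+1,k})/(j+1) + d^m_{k',k}/(k'+1) ). -/

import Mathlib

/-!
Abel summation writes the error as `(1 - d₁)(π - x)/2` plus a combination of the remainders `Rⱼ(x)`
of the undamped sawtooth series, with coefficients `dⱼ - dⱼ₊₁` and `d_{k'}`, which are nonnegative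
because `sin t / t` is nonnegative and decreasing on `[0, π]`. With `z = -exp (i x)`, the number
`-Rⱼ(x)` is the imaginary part of the `j`-th Taylor remainder of `log (1 + z)`. Along the segment
from `0` to `z` one has `‖1 + t z‖ ≥ ‖1 + z‖ / 2`, so this remainder, which has derivative
`(-z)ʲ / (1 + z)`, is at most `2 / ((j + 1) ‖1 + z‖) = 1 / ((j + 1) |sin (x / 2)|)`.
-/

open Real

/-- Exponent-`m` Lanczos damping factors `d^m_{j,k}`, with `d^m_{0,k} = 1`. -/
noncomputable def dampL (m : ℝ) (k j : ℕ) : ℝ :=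
  if j = 0 then 1
  else (Real.sin (j * Real.pi / (k + 1)) / (j * Real.pi / (k + 1))) ^ m

section LogTaylor

open Complex (logTaylor slitPlane)

lemma one_add_mem_slitPlane_of_norm_le_one {z : ℂ} (hz : ‖z‖ ≤ 1) (hz' : z ≠ -1) :
    1 + z ∈ slitPlane := by
  rw [Complex.mem_slitPlane_iff]
  by_contra! h
  obtain ⟨hre, him⟩ : 1 + z.re ≤ 0 ∧ z.im = 0 := by simpa using h
  have hre' : -1 ≤ z.re := (abs_le.mp ((Complex.abs_re_le_norm z).trans hz)).1
  exact hz' (Complex.ext (by simpa using (by linarith : z.re = -1)) (by simpa using him))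

lemma norm_one_add_le_two_mul_norm_one_add_mul {z : ℂ} (hz : ‖z‖ ≤ 1) {t : ℝ}
    (ht : t ∈ Set.Icc (0 : ℝ) 1) : ‖1 + z‖ ≤ 2 * ‖1 + t * z‖ := by
  have hdiff : ‖(1 - t) * z‖ ≤ 1 - t := by
    rw [← Complex.ofReal_one, ← Complex.ofReal_sub, norm_mul,
      Complex.norm_of_nonneg (sub_nonneg.mpr ht.2)]
    exact mul_le_of_le_one_right (sub_nonneg.mpr ht.2) hz
  have hlow : 1 - t ≤ ‖1 + t * z‖ := by
    have htz : ‖t * z‖ ≤ t := by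
      rw [norm_mul, Complex.norm_of_nonneg ht.1]
      exact mul_le_of_le_one_right ht.1 hz
    have := norm_sub_le_norm_add 1 (t * z)
    rw [norm_one] at this
    linarith
  calc ‖1 + z‖ = ‖(1 + t * z) + (1 - t) * z‖ := by ring_nf
    _ ≤ ‖1 + t * z‖ + ‖(1 - t) * z‖ := norm_add_le _ _
    _ ≤ 2 * ‖1 + t * z‖ := by linarith

lemma hasDerivAt_log_one_add_mul_sub_logTaylor {z : ℂ} {t : ℝ} (hz : 1 + t * z ∈ slitPlane)
    (n : ℕ) :
    HasDerivAt (fun s : ℝ ↦ Complex.log (1 + s * z) - logTaylor (n + 1) (s * z))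
      ((-(t * z)) ^ n * (1 + t * z)⁻¹ * z) t := by
  have hline : HasDerivAt (fun s : ℝ ↦ (s : ℂ) * z) z t := by
    simpa using (Complex.ofRealCLM.hasDerivAt (x := t)).mul_const z
  exact (Complex.hasDerivAt_log_sub_logTaylor n hz).comp t hline

lemma norm_pow_mul_one_add_mul_inv_mul_le {z : ℂ} (hz : ‖z‖ ≤ 1) (hz' : z ≠ -1) {t : ℝ}
    (ht : t ∈ Set.Icc (0 : ℝ) 1) (n : ℕ) :
    ‖(-(t * z)) ^ n * (1 + t * z)⁻¹ * z‖ ≤ 2 * ‖z‖ ^ (n + 1) / ‖1 + z‖ * t ^ n := by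
  have hpos : 0 < ‖1 + z‖ :=
    norm_pos_iff.mpr (Complex.slitPlane_ne_zero (one_add_mem_slitPlane_of_norm_le_one hz hz'))
  have ht_nonneg : 0 ≤ t := ht.1
  have hinv : ‖1 + t * z‖⁻¹ ≤ 2 / ‖1 + z‖ := by
    have := norm_one_add_le_two_mul_norm_one_add_mul hz ht
    rw [inv_le_comm₀ (by linarith) (by positivity), inv_div]
    linarith
  calc ‖(-(t * z)) ^ n * (1 + t * z)⁻¹ * z‖
      = t ^ n * ‖z‖ ^ (n + 1) * ‖1 + t * z‖⁻¹ := by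
        rw [norm_mul, norm_mul, norm_pow, norm_neg, norm_mul, Complex.norm_of_nonneg ht_nonneg,
          norm_inv]
        ring
    _ ≤ t ^ n * ‖z‖ ^ (n + 1) * (2 / ‖1 + z‖) := by gcongr
    _ = 2 * ‖z‖ ^ (n + 1) / ‖1 + z‖ * t ^ n := by ring

lemma norm_log_one_add_sub_logTaylor_le {z : ℂ} (hz : ‖z‖ ≤ 1) (hz' : z ≠ -1) (n : ℕ) :
    ‖Complex.log (1 + z) - logTaylor (n + 1) z‖ ≤ 2 * ‖z‖ ^ (n + 1) / ((n + 1) * ‖1 + z‖) := by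
  let f : ℝ → ℂ := fun t ↦ Complex.log (1 + t * z) - logTaylor (n + 1) (t * z)
  let B : ℝ → ℝ := fun t ↦ 2 * ‖z‖ ^ (n + 1) / ((n + 1) * ‖1 + z‖) * t ^ (n + 1)
  have hf : ∀ t ∈ Set.Icc (0 : ℝ) 1,
      HasDerivAt f ((-(t * z)) ^ n * (1 + t * z)⁻¹ * z) t := by
    refine fun t ht ↦ hasDerivAt_log_one_add_mul_sub_logTaylor ?_ n
    simpa using Complex.starConvex_one_slitPlane.add_smul_mem
      (one_add_mem_slitPlane_of_norm_le_one hz hz') ht.1 ht.2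
  have hB : ∀ t, HasDerivAt B (2 * ‖z‖ ^ (n + 1) / ‖1 + z‖ * t ^ n) t := by
    intro t
    refine ((hasDerivAt_pow (n + 1) t).const_mul _).congr_deriv ?_
    push_cast
    field_simp
  have hbound : ‖f 1‖ ≤ B 1 := image_norm_le_of_norm_deriv_right_le_deriv_boundary
    (fun t ht ↦ (hf t ht).continuousAt.continuousWithinAt)
    (fun t ht ↦ (hf t (Set.Ico_subset_Icc_self ht)).hasDerivWithinAt)
    (by simp [f, B, Complex.logTaylor_at_zero]) hB
    (fun t ht ↦ norm_pow_mul_one_add_mul_inv_mul_le hz hz' (Set.Ico_subset_Icc_self ht) n)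
    (Set.right_mem_Icc.mpr zero_le_one)
  simpa [f, B] using hbound

end LogTaylor

section Sawtooth

/-- The `n`-th remainder of the Fourier series `(π - x) / 2 = ∑ sin (j x) / j` of the sawtooth
wave on `(0, 2π)`. -/
noncomputable def sawtoothRemainder (n : ℕ) (x : ℝ) : ℝ :=
  (π - x) / 2 - ∑ j ∈ Finset.Icc 1 n, sin (j * x) / j

variable {x : ℝ}

lemma sin_half_pos (hx : x ∈ Set.Ioo 0 (2 * π)) : 0 < sin (x / 2) :=
  sin_pos_of_pos_of_lt_pi (by linarith [hx.1]) (by linarith [hx.2])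

lemma norm_one_sub_exp_mul_I (x : ℝ) : ‖1 - Complex.exp (x * Complex.I)‖ = 2 * |sin (x / 2)| := by
  rw [norm_sub_rev, mul_comm, Complex.norm_exp_I_mul_ofReal_sub_one, norm_mul]
  simp

lemma arg_one_sub_exp_mul_I (hx : x ∈ Set.Ioo 0 (2 * π)) :
    (1 - Complex.exp (x * Complex.I)).arg = (x - π) / 2 := by
  have hpolar : 1 - Complex.exp (x * Complex.I) = (2 * sin (x / 2) : ℝ) *
      (Complex.cos ((x - π) / 2 : ℝ) + Complex.sin ((x - π) / 2 : ℝ) * Complex.I) := by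
    have hcos : cos x = 1 - 2 * sin (x / 2) ^ 2 := by
      rw [sin_sq_eq_half_sub]; ring_nf
    have hsin : sin x = 2 * sin (x / 2) * cos (x / 2) := by rw [← sin_two_mul]; ring_nf
    rw [sub_div, ← Complex.ofReal_cos, ← Complex.ofReal_sin, cos_sub_pi_div_two,
      sin_sub_pi_div_two, Complex.exp_mul_I, ← Complex.ofReal_cos, ← Complex.ofReal_sin, hcos, hsin]
    push_cast
    ring
  rw [hpolar]
  exact Complex.arg_mul_cos_add_sin_mul_I (mul_pos two_pos (sin_half_pos hx))
    ⟨by linarith [hx.1, pi_pos], by linarith [hx.2, pi_pos]⟩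

lemma logTaylor_neg_exp_mul_I_im (n : ℕ) (x : ℝ) :
    (Complex.logTaylor (n + 1) (-Complex.exp (x * Complex.I))).im
      = -∑ j ∈ Finset.Icc 1 n, sin (j * x) / j := by
  induction n with
  | zero => simp [Complex.logTaylor_succ, Complex.logTaylor_zero]
  | succ n ih =>
    have hterm : (-1) ^ (n + 1 + 1) * (-Complex.exp (x * Complex.I)) ^ (n + 1) / ((n + 1 : ℕ) : ℂ)
        = -(Complex.exp (((n + 1 : ℕ) * x : ℝ) * Complex.I) / ((n + 1 : ℕ) : ℝ)) := by
      rw [pow_succ, mul_right_comm, ← mul_pow, neg_one_mul, neg_neg, ← Complex.exp_nat_mul]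
      push_cast
      ring_nf
    rw [Complex.logTaylor_succ, Pi.add_apply, Complex.add_im, ih, hterm, Complex.neg_im,
      Complex.div_ofReal_im, Complex.exp_ofReal_mul_I_im, Finset.sum_Icc_succ_top (by omega),
      neg_add]

lemma sawtoothRemainder_eq_im (hx : x ∈ Set.Ioo 0 (2 * π)) (n : ℕ) :
    sawtoothRemainder n x = -(Complex.log (1 + -Complex.exp (x * Complex.I))
      - Complex.logTaylor (n + 1) (-Complex.exp (x * Complex.I))).im := by
  rw [Complex.sub_im, logTaylor_neg_exp_mul_I_im, ← sub_eq_add_neg, Complex.log_im,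
    arg_one_sub_exp_mul_I hx, sawtoothRemainder]
  ring

lemma abs_sawtoothRemainder_le (hx : x ∈ Set.Ioo 0 (2 * π)) (n : ℕ) :
    |sawtoothRemainder n x| ≤ 1 / |sin (x / 2)| * (1 / (n + 1)) := by
  set z := -Complex.exp (x * Complex.I) with hz
  have hnorm : ‖z‖ = 1 := by rw [hz, norm_neg, Complex.norm_exp_ofReal_mul_I]
  have hnorm_add : ‖1 + z‖ = 2 * |sin (x / 2)| := norm_one_sub_exp_mul_I x
  have hne : z ≠ -1 := by
    intro h
    simp [h, (sin_half_pos hx).ne'] at hnorm_add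
  rw [sawtoothRemainder_eq_im hx, abs_neg]
  calc _ ≤ ‖Complex.log (1 + z) - Complex.logTaylor (n + 1) z‖ := Complex.abs_im_le_norm _
    _ ≤ 2 * ‖z‖ ^ (n + 1) / ((n + 1) * ‖1 + z‖) :=
      norm_log_one_add_sub_logTaylor_le hnorm.le hne n
    _ = 1 / |sin (x / 2)| * (1 / (n + 1)) := by
      rw [hnorm, hnorm_add, one_pow]
      field_simp

end Sawtooth

section DampedSawtooth

lemma sub_sum_Icc_mul_by_parts {R : Type*} [Ring R] (c : R) (d a : ℕ → R) (n : ℕ) :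
    c - ∑ j ∈ Finset.Icc 1 (n + 1), d j * a j
      = (1 - d 1) * c
        + (∑ j ∈ Finset.Icc 1 n, (d j - d (j + 1)) * (c - ∑ i ∈ Finset.Icc 1 j, a i)
          + d (n + 1) * (c - ∑ i ∈ Finset.Icc 1 (n + 1), a i)) := by
  induction n with
  | zero => simp [sub_mul, mul_sub]
  | succ n ih =>
    rw [Finset.sum_Icc_succ_top (by omega), ← sub_sub, ih,
      Finset.sum_Icc_succ_top (f := fun j ↦ (d j - d (j + 1)) * _) (by omega),
      Finset.sum_Icc_succ_top (b := n + 1) (f := a) (by omega)]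
    noncomm_ring

variable {x : ℝ}

lemma abs_sawtooth_sub_sum_mul_sin_le (d : ℕ → ℝ) {n : ℕ} (hn : 1 ≤ n)
    (hx : x ∈ Set.Ioo 0 (2 * π)) :
    |(π - x) / 2 - ∑ j ∈ Finset.Icc 1 n, d j * sin (j * x) / j|
      ≤ |1 - d 1| * |π - x| / 2
        + 1 / |sin (x / 2)|
          * (∑ j ∈ Finset.Icc 1 (n - 1), |d j - d (j + 1)| / (j + 1) + |d n| / (n + 1)) := by
  obtain ⟨n, rfl⟩ := Nat.exists_eq_add_of_le' hn
  have hterm (c : ℝ) (j : ℕ) :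
      |c * sawtoothRemainder j x| ≤ 1 / |sin (x / 2)| * (|c| / (j + 1)) := by
    rw [abs_mul]
    calc _ ≤ |c| * (1 / |sin (x / 2)| * (1 / (j + 1))) := by
          gcongr
          exact abs_sawtoothRemainder_le hx j
      _ = _ := by ring
  simp_rw [mul_div_assoc (d _)]
  rw [sub_sum_Icc_mul_by_parts, Nat.add_sub_cancel, mul_add (1 / |sin (x / 2)|), Finset.mul_sum]
  refine (abs_add_le _ _).trans (add_le_add ?_ ((abs_add_le _ _).trans (add_le_add ?_ ?_)))
  · rw [abs_mul, abs_div, abs_two, mul_div_assoc]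
  · exact (Finset.abs_sum_le_sum_abs _ _).trans (Finset.sum_le_sum fun j _ ↦ hterm _ j)
  · exact hterm _ (n + 1)

theorem damped_tail_bound_general {d : ℕ → ℝ} {n : ℕ} (hn : 1 ≤ n) (hd_one : d 1 ≤ 1)
    (hd : AntitoneOn d (Set.Icc 1 n)) (hd_nonneg : 0 ≤ d n) (hx : x ∈ Set.Ioo 0 (2 * π)) :
    |(π - x) / 2 - ∑ j ∈ Finset.Icc 1 n, d j * sin (j * x) / j|
      ≤ (1 - d 1) * |π - x| / 2
        + 1 / |sin (x / 2)|
          * (∑ j ∈ Finset.Icc 1 (n - 1), (d j - d (j + 1)) / (j + 1) + d n / (n + 1)) := by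
  have hdiff : ∀ j ∈ Finset.Icc 1 (n - 1), |d j - d (j + 1)| / (j + 1 : ℝ)
      = (d j - d (j + 1)) / (j + 1) := by
    intro j hj
    have ⟨hj_one, hj_le⟩ := Finset.mem_Icc.mp hj
    rw [abs_of_nonneg (sub_nonneg.mpr (hd ⟨hj_one, by omega⟩ ⟨by omega, by omega⟩ j.le_succ))]
  have hbound := abs_sawtooth_sub_sum_mul_sin_le d hn hx
  rwa [Finset.sum_congr rfl hdiff, abs_of_nonneg (sub_nonneg.mpr hd_one),
    abs_of_nonneg hd_nonneg] at hbound

end DampedSawtooth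

section Damping

lemma sinc_nonneg_of_mem_Icc {t : ℝ} (ht : t ∈ Set.Icc 0 π) : 0 ≤ sinc t := by
  rw [sinc_apply]
  split_ifs
  · exact zero_le_one
  · exact div_nonneg (sin_nonneg_of_mem_Icc ht) ht.1

lemma antitoneOn_sinc : AntitoneOn sinc (Set.Icc 0 π) := by
  intro a ha b hb hab
  rcases ha.1.eq_or_lt with rfl | ha_pos
  · simpa using sinc_le_one b
  have hb_pos : 0 < b := ha_pos.trans_le hab
  have hslope : slope sin 0 b ≤ slope sin 0 a :=
    strictConcaveOn_sin_Icc.concaveOn.slope_anti (Set.left_mem_Icc.mpr pi_pos.le)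
      ⟨ha, ha_pos.ne'⟩ ⟨hb, hb_pos.ne'⟩ hab
  rwa [← dslope_of_ne _ ha_pos.ne', ← dslope_of_ne _ hb_pos.ne', ← sinc_eq_dslope] at hslope

lemma mul_pi_div_mem_Icc {k j : ℕ} (hj : j ≤ k + 1) :
    (j * π / (k + 1) : ℝ) ∈ Set.Icc 0 π := by
  have hj' : (j : ℝ) ≤ k + 1 := mod_cast hj
  refine ⟨by positivity, ?_⟩
  rw [div_le_iff₀ (by positivity), mul_comm π]
  gcongr

lemma dampL_eq_sinc_rpow (m : ℝ) (k j : ℕ) : dampL m k j = sinc (j * π / (k + 1)) ^ m := by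
  rcases eq_or_ne j 0 with rfl | hj
  · simp [dampL]
  · rw [dampL, if_neg hj, sinc_of_ne_zero (by positivity)]

lemma dampL_nonneg (m : ℝ) {k j : ℕ} (hj : j ≤ k + 1) : 0 ≤ dampL m k j := by
  rw [dampL_eq_sinc_rpow]
  exact rpow_nonneg (sinc_nonneg_of_mem_Icc (mul_pi_div_mem_Icc hj)) m

lemma dampL_antitoneOn {m : ℝ} (hm : 0 ≤ m) (k : ℕ) :
    AntitoneOn (dampL m k) (Set.Iic (k + 1)) := by
  intro i hi j hj hij
  rw [dampL_eq_sinc_rpow, dampL_eq_sinc_rpow]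
  refine rpow_le_rpow (sinc_nonneg_of_mem_Icc (mul_pi_div_mem_Icc hj))
    (antitoneOn_sinc (mul_pi_div_mem_Icc hi) (mul_pi_div_mem_Icc hj) ?_) hm
  gcongr

lemma dampL_le_one {m : ℝ} (hm : 0 ≤ m) {k j : ℕ} (hj : j ≤ k + 1) : dampL m k j ≤ 1 := by
  rw [dampL_eq_sinc_rpow]
  exact rpow_le_one (sinc_nonneg_of_mem_Icc (mul_pi_div_mem_Icc hj)) (sinc_le_one _) hm

end Damping

/-- For `E(x) = (π - x)/2 - ∑_{j=1}^{k'} d^m_{j,k} sin(jx)/j` and `x ∈ (0, 2π)`,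
`|E(x)| ≤ (1 - d^m_{1,k})|π - x|/2
  + (1/|sin(x/2)|)(∑_{j=1}^{k'-1}(d^m_{j,k} - d^m_{j+1,k})/(j+1) + d^m_{k',k}/(k'+1))`. -/
theorem damped_tail_bound (m : ℝ) (hm : 0 < m) (k k' : ℕ) (hk : 1 ≤ k)
    (hk' : 1 ≤ k') (hk'k : k' ≤ k) (x : ℝ) (hx : x ∈ Set.Ioo (0 : ℝ) (2 * Real.pi)) :
    |(Real.pi - x) / 2 - ∑ j ∈ Finset.Icc 1 k', dampL m k j * Real.sin (j * x) / j|
      ≤ (1 - dampL m k 1) * |Real.pi - x| / 2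
        + (1 / |Real.sin (x / 2)|)
          * ((∑ j ∈ Finset.Icc 1 (k' - 1), (dampL m k j - dampL m k (j + 1)) / (j + 1))
            + dampL m k k' / (k' + 1)) := by
  have hanti : AntitoneOn (dampL m k) (Set.Icc 1 k') :=
    (dampL_antitoneOn hm.le k).mono fun j hj ↦ hj.2.trans (by omega)
  exact damped_tail_bound_general hk' (dampL_le_one hm.le (by omega)) hanti
    (dampL_nonneg m (by omega)) hx
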